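/- Let G be a locally coherent Grothendieck category of finite global dimension d, and let X be a finitely presented object of G. Then the stalk complex X[0] is a compact object of D(G): for any family (M_i)_{i∈I} of objects of D(G), the canonical map ∐_{i∈I} Hom_{D(G)}(X[0], M_i) → Hom_{D(G)}(X[0], ∐_{i∈I} M_i) is bijective. -/

import Mathlib

open CategoryTheory CategoryTheory.Limits DirectSum

universe w v u

variable {G : Type u} [Category.{v} G] [Abelian G] [HasColimits G]
  [HasDerivedCategory.{w} G]

/-- The finitely presented objects of `G`: those `X` such that `Hom_G(X, ?)` preserves
filtered colimits (direct limits). -/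
def fpSet : Set G :=
  {X | ∀ (J : Type v) (_ : SmallCategory J) (_ : IsFiltered J),
    Nonempty (PreservesColimitsOfShape J (coyoneda.obj (Opposite.op X)))}

/-- The canonical map `⊕ᵢ Hom(P, Mᵢ) ⟶ Hom(P, Q)` determined by morphisms `jᵢ : Mᵢ ⟶ Q`. -/
noncomputable def cmap {D : Type*} [Category D] [Preadditive D]
    (P : D) {I : Type v} [DecidableEq I] (M : I → D) {Q : D}
    (j : ∀ i, M i ⟶ Q) : (⨁ (i : I), (P ⟶ M i)) →+ (P ⟶ Q) :=
  DirectSum.toAddMonoid fun i =>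
    AddMonoidHom.mk' (fun φ => φ ≫ j i) (fun _ _ => Preadditive.add_comp _ _ _ _ _ _)


section Helpers

open Pretriangulated

theorem aux_fp_iff (X : G) : X ∈ fpSet (G := G) ↔ IsFinitelyPresentable.{v} X := by
  rw [isFinitelyPresentable_iff_preservesFilteredColimitsOfSize]
  constructor
  · intro h
    exact ⟨fun J _ _ => (h J inferInstance inferInstance).some⟩
  · intro h J _ _
    exact ⟨h.preserves_filtered_colimits J⟩

/-- Quotients of `Y` by the finite partial sums of a family of morphisms. -/
noncomputable def auxFunctor {T : Type v} {B : T → G} {Y : G} (x : ∀ t, B t ⟶ Y) :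
    Finset T ⥤ G where
  obj S := cokernel (Sigma.desc (fun t : S => x t.1))
  map {S S'} h := cokernel.desc _ (cokernel.π _) (by
    ext t
    have h1 := cokernel.condition (Sigma.desc (fun t : S' => x t.1))
    have h2 := (Sigma.ι (fun t : S' => B t.1) ⟨t.1, leOfHom h t.2⟩) ≫= h1
    rw [Sigma.ι_desc_assoc, comp_zero] at h2
    rw [Sigma.ι_desc_assoc, comp_zero, h2])

theorem aux_finite {T : Type v} {B : T → G} {Y : G} (x : ∀ t, B t ⟶ Y)
    (hx : ∀ (W : G) (h : Y ⟶ W), (∀ t, x t ≫ h = 0) → h = 0)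
    {A : G} [IsFinitelyPresentable.{v} A] (g : A ⟶ Y) :
    ∃ S : Finset T, ∀ (W : G) (h : Y ⟶ W), (∀ t ∈ S, x t ≫ h = 0) → g ≫ h = 0 := by
  classical
  let q (S : Finset T) : Y ⟶ (auxFunctor x).obj S := cokernel.π _
  have hq : ∀ {S S' : Finset T} (u : S ⟶ S'), q S ≫ (auxFunctor x).map u = q S' := by
    intro S S' u
    exact cokernel.π_desc _ _ _
  have hxq : ∀ (S : Finset T) t, t ∈ S → x t ≫ q S = 0 := by
    intro S t ht
    have := (Sigma.ι (fun t : S => B t.1) ⟨t, ht⟩) ≫=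
      cokernel.condition (Sigma.desc (fun t : S => x t.1))
    rw [Sigma.ι_desc_assoc, comp_zero] at this
    exact this
  let c := colimit.cocone (auxFunctor x)
  have hzero : q ∅ ≫ c.ι.app ∅ = 0 := by
    apply hx
    intro t
    have u : (∅ : Finset T) ⟶ {t} := homOfLE (by simp)
    rw [← c.w u, ← Category.assoc (q ∅), hq, ← Category.assoc, hxq _ _ (by simp), zero_comp]
  obtain ⟨S, u, w, huw⟩ := IsFinitelyPresentable.exists_eq_of_isColimit
    (colimit.isColimit (auxFunctor x)) (g ≫ q ∅) (0 : A ⟶ (auxFunctor x).obj ∅)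
    (by
      have : (g ≫ q ∅) ≫ c.ι.app ∅ = 0 := by rw [Category.assoc, hzero, comp_zero]
      rw [zero_comp]; exact this)
  rw [Category.assoc, hq, zero_comp] at huw
  refine ⟨S, fun W h hh => ?_⟩
  let k : (auxFunctor x).obj S ⟶ W := cokernel.desc _ h (by ext t; simpa using hh t.1 t.2)
  have : h = q S ≫ k := (cokernel.π_desc _ _ _).symm
  rw [this, ← Category.assoc, huw, zero_comp]

theorem aux_sum_fp {T : Type v} (B : T → G) [∀ t, IsFinitelyPresentable.{v} (B t)]
    (S : Finset T) : IsFinitelyPresentable.{v} (∐ (fun t : S => B t.1)) := by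
  have := Cardinal.fact_isRegular_aleph0.{v}
  have : ∀ k, IsCardinalPresentable ((Discrete.functor (fun t : S => B t.1)).obj k)
      Cardinal.aleph0.{v} := by
    rintro ⟨k⟩
    dsimp
    infer_instance
  refine isCardinalPresentable_of_isColimit'.{v} _
    (colimit.isColimit (Discrete.functor (fun t : S => B t.1))) _ ?_
  rw [hasCardinalLT_aleph0_iff]
  infer_instance

theorem aux_cover {ι : Type v} (rep : ι → G) [∀ i, IsFinitelyPresentable.{v} (rep i)]
    (hrep : ∀ ⦃X Y : G⦄ (f : X ⟶ Y), f ≠ 0 → ∃ i, ∃ g : rep i ⟶ X, g ≫ f ≠ 0)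
    {Z X : G} (p : Z ⟶ X) [Epi p] [IsFinitelyPresentable.{v} X] :
    ∃ (P : G) (_ : IsFinitelyPresentable.{v} P) (u : P ⟶ Z), Epi (u ≫ p) := by
  obtain ⟨S, hS⟩ := aux_finite (T := Σ i, (rep i ⟶ Z)) (B := fun t => rep t.1)
    (fun t => t.2 ≫ p) (by
      intro W h hh
      by_contra hne
      have : p ≫ h ≠ 0 := fun h0 => hne (by rw [← cancel_epi p, h0, comp_zero])
      obtain ⟨i, g, hg⟩ := hrep _ this
      exact hg (by simpa using hh ⟨i, g⟩)) (𝟙 X)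
  refine ⟨_, aux_sum_fp (fun t : (Σ i, (rep i ⟶ Z)) => rep t.1) S,
    Sigma.desc (fun t => t.1.2), ?_⟩
  apply Preadditive.epi_of_cancel_zero
  intro W h hh
  have := hS W h (fun t ht => by
    have := Sigma.ι (fun t : S => rep t.1.1) ⟨t, ht⟩ ≫= hh
    simpa using this)
  simpa using this

theorem cmap_mem {D : Type*} [Category D] [Preadditive D]
    (P : D) {I : Type v} [DecidableEq I] (M : I → D) {Q : D}
    (j : ∀ i, M i ⟶ Q) (i : I) (a : P ⟶ M i) : a ≫ j i ∈ (cmap P M j).range :=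
  ⟨DirectSum.of _ i a, by simp [cmap]⟩

theorem cmap_comp {D : Type*} [Category D] [Preadditive D]
    {P P' : D} {I : Type v} [DecidableEq I] {M M' : I → D} {Q Q' : D}
    {j : ∀ i, M i ⟶ Q} {j' : ∀ i, M' i ⟶ Q'} (u : P' ⟶ P) (r : Q ⟶ Q') (m : ∀ i, M i ⟶ M' i)
    (hm : ∀ i, j i ≫ r = m i ≫ j' i)
    (f : P ⟶ Q) (hf : f ∈ (cmap P M j).range) : u ≫ f ≫ r ∈ (cmap P' M' j').range := by
  obtain ⟨x, rfl⟩ := hf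
  induction x using DirectSum.induction_on with
  | zero => simp [zero_mem]
  | of i a =>
    have : u ≫ (cmap P M j) (DirectSum.of (fun i => P ⟶ M i) i a) ≫ r
        = (u ≫ a ≫ m i) ≫ j' i := by
      simp [cmap, hm]
    rw [this]
    exact cmap_mem _ _ _ _ _
  | add x y hx hy =>
    rw [map_add, Preadditive.add_comp, Preadditive.comp_add]
    exact add_mem hx hy

/-- projections from a coproduct -/
noncomputable def auxπ {D : Type*} [Category D] [Preadditive D] {I : Type v} [DecidableEq I]
    (M : I → D) [HasCoproduct M] (i : I) : ∐ M ⟶ M i :=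
  Sigma.desc (fun k => if h : k = i then eqToHom (by rw [h]) else 0)

theorem aux_ι_π {D : Type*} [Category D] [Preadditive D] {I : Type v} [DecidableEq I]
    (M : I → D) [HasCoproduct M] (i : I) : Sigma.ι M i ≫ auxπ M i = 𝟙 _ := by
  simp [auxπ]

theorem aux_ι_π_ne {D : Type*} [Category D] [Preadditive D] {I : Type v} [DecidableEq I]
    (M : I → D) [HasCoproduct M] (k i : I) (h : k ≠ i) : Sigma.ι M k ≫ auxπ M i = 0 := by
  simp [auxπ, h]

theorem aux_inj {D : Type*} [Category D] [Preadditive D] {I : Type v} [DecidableEq I]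
    (M : I → D) [HasCoproduct M] (P : D) :
    Function.Injective (cmap P M (fun i => Sigma.ι M i)) := by
  have key : ∀ (x : ⨁ (i : I), (P ⟶ M i)) (i : I),
      (cmap P M (fun i => Sigma.ι M i)) x ≫ auxπ M i = x i := by
    intro x i
    induction x using DirectSum.induction_on with
    | zero => simp
    | of k a =>
      by_cases h : k = i
      · subst h
        simp [cmap, aux_ι_π]
      · simp [cmap, aux_ι_π_ne _ _ _ h, DirectSum.of_eq_of_ne _ _ _ (Ne.symm h)]
    | add x y hx hy => simp [hx, hy]
  intro x y hxy
  ext i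
  rw [← key, ← key, hxy]

theorem aux_e {D : Type*} [Category D] [Preadditive D] {I : Type v} [DecidableEq I]
    (M : I → D) [HasCoproduct M] (S : Finset I) (k : I) (hk : k ∈ S) :
    Sigma.ι M k ≫ (𝟙 _ - ∑ i ∈ S, auxπ M i ≫ Sigma.ι M i) = 0 := by
  rw [Preadditive.comp_sub, Preadditive.comp_sum, Finset.sum_eq_single k]
  · rw [← Category.assoc, aux_ι_π]; simp
  · intro b _ hb
    rw [← Category.assoc, aux_ι_π_ne _ _ _ hb.symm, zero_comp]
  · intro h; exact absurd hk h

theorem aux_complex {I : Type v} [DecidableEq I] (K : I → CochainComplex G ℤ) (n : ℤ)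
    (P : G) [IsFinitelyPresentable.{v} P]
    (g : (HomologicalComplex.single G (ComplexShape.up ℤ) n).obj P ⟶ ∐ K) :
    ∃ S : Finset I, g = ∑ i ∈ S, (g ≫ auxπ K i) ≫ Sigma.ι K i := by
  obtain ⟨S, hS⟩ := aux_finite (fun i => (Sigma.ι K i).f n) (by
    intro W h hh
    have hc := isColimitOfPreserves (HomologicalComplex.eval G (ComplexShape.up ℤ) n)
      (colimit.isColimit (Discrete.functor K))
    refine hc.hom_ext (fun ⟨i⟩ => ?_)
    exact (hh i).trans comp_zero.symm)
    ((HomologicalComplex.singleObjXSelf (ComplexShape.up ℤ) n P).inv ≫ g.f n)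
  refine ⟨S, ?_⟩
  have h1 := hS _ ((𝟙 (∐ K) - ∑ i ∈ S, auxπ K i ≫ Sigma.ι K i : ∐ K ⟶ ∐ K).f n) (by
    intro t ht
    rw [← HomologicalComplex.comp_f, aux_e _ _ _ ht]; rfl)
  rw [Category.assoc, ← HomologicalComplex.comp_f] at h1
  have h2 : g ≫ (𝟙 (∐ K) - ∑ i ∈ S, auxπ K i ≫ Sigma.ι K i : ∐ K ⟶ ∐ K) = 0 := by
    apply HomologicalComplex.from_single_hom_ext
    rw [← cancel_epi (HomologicalComplex.singleObjXSelf (ComplexShape.up ℤ) n P).inv, h1]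
    simp
  rw [Preadditive.comp_sub, sub_eq_zero, Category.comp_id, Preadditive.comp_sum] at h2
  simpa using h2

theorem aux_epi (P : CochainComplex G ℤ) (n : ℤ) (X : G)
    (t : P ⟶ (HomologicalComplex.single G (ComplexShape.up ℤ) n).obj X) [QuasiIso t] :
    Epi (P.iCycles n ≫ t.f n ≫
      (HomologicalComplex.singleObjXSelf (ComplexShape.up ℤ) n X).hom) := by
  have h1 : HomologicalComplex.cyclesMap t n ≫
      (HomologicalComplex.singleObjCyclesSelfIso (ComplexShape.up ℤ) n X).hom =
      P.homologyπ n ≫ HomologicalComplex.homologyMap t n ≫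
        (HomologicalComplex.singleObjHomologySelfIso (ComplexShape.up ℤ) n X).hom := by
    rw [HomologicalComplex.homologyπ_naturality_assoc,
      HomologicalComplex.homologyπ_singleObjHomologySelfIso_hom]
  have h2 : P.iCycles n ≫ t.f n ≫
      (HomologicalComplex.singleObjXSelf (ComplexShape.up ℤ) n X).hom =
      HomologicalComplex.cyclesMap t n ≫
      (HomologicalComplex.singleObjCyclesSelfIso (ComplexShape.up ℤ) n X).hom := by
    rw [HomologicalComplex.singleObjCyclesSelfIso_hom,
      HomologicalComplex.cyclesMap_i_assoc]
  rw [h2, h1]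
  infer_instance

theorem aux_step0 {ι : Type v} (rep : ι → G) [∀ i, IsFinitelyPresentable.{v} (rep i)]
    (hrep : ∀ ⦃X Y : G⦄ (f : X ⟶ Y), f ≠ 0 → ∃ i, ∃ g : rep i ⟶ X, g ≫ f ≠ 0)
    (hker : ∀ ⦃X Y : G⦄ (f : X ⟶ Y), IsFinitelyPresentable.{v} X → IsFinitelyPresentable.{v} Y →
      IsFinitelyPresentable.{v} (kernel f))
    {I : Type v} [DecidableEq I] (K : I → CochainComplex G ℤ) (n : ℤ)
    (X : G) [IsFinitelyPresentable.{v} X]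
    (f : DerivedCategory.Q.obj ((HomologicalComplex.single G (ComplexShape.up ℤ) n).obj X) ⟶
      DerivedCategory.Q.obj (∐ K)) :
    ∃ (X' : G) (_ : IsFinitelyPresentable.{v} X')
      (δ : DerivedCategory.Q.obj ((HomologicalComplex.single G (ComplexShape.up ℤ) n).obj X) ⟶
        (DerivedCategory.Q.obj ((HomologicalComplex.single G (ComplexShape.up ℤ) n).obj X'))⟦(1 : ℤ)⟧)
      (f' : (DerivedCategory.Q.obj ((HomologicalComplex.single G (ComplexShape.up ℤ) n).obj X'))⟦(1 : ℤ)⟧ ⟶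
        DerivedCategory.Q.obj (∐ K)),
      f - δ ≫ f' ∈ (cmap (DerivedCategory.Q.obj ((HomologicalComplex.single G (ComplexShape.up ℤ) n).obj X))
        (fun i => DerivedCategory.Q.obj (K i))
        (fun i => DerivedCategory.Q.map (Sigma.ι K i))).range := by
  obtain ⟨P, t, ht, g, hf⟩ := DerivedCategory.right_fac
    (X := (HomologicalComplex.single G (ComplexShape.up ℤ) n).obj X) f
  have hqt : QuasiIso t := (DerivedCategory.isIso_Q_map_iff_quasiIso _ t).1 ht
  have := aux_epi P n X t
  obtain ⟨P₀, hP₀, u, hu⟩ := aux_cover rep hrep (P.iCycles n ≫ t.f n ≫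
      (HomologicalComplex.singleObjXSelf (ComplexShape.up ℤ) n X).hom)
  set p : P₀ ⟶ X := u ≫ P.iCycles n ≫ t.f n ≫
      (HomologicalComplex.singleObjXSelf (ComplexShape.up ℤ) n X).hom with hp
  let v : (HomologicalComplex.single G (ComplexShape.up ℤ) n).obj P₀ ⟶ P :=
    HomologicalComplex.mkHomFromSingle (u ≫ P.iCycles n) (by intro k _; simp)
  have hv : v ≫ t = (HomologicalComplex.single G (ComplexShape.up ℤ) n).map p := by
    apply HomologicalComplex.from_single_hom_ext
    rw [HomologicalComplex.single_map_f_self, HomologicalComplex.comp_f,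
      HomologicalComplex.mkHomFromSingle_f, hp]
    simp
  have hpf : DerivedCategory.Q.map
      ((HomologicalComplex.single G (ComplexShape.up ℤ) n).map p) ≫ f =
      DerivedCategory.Q.map (v ≫ g) := by
    rw [hf, ← hv, Functor.map_comp, Functor.map_comp, Category.assoc, IsIso.hom_inv_id_assoc]
  obtain ⟨S, hS⟩ := aux_complex K n P₀ (v ≫ g)
  let e : ∐ K ⟶ ∐ K := ∑ i ∈ S, auxπ K i ≫ Sigma.ι K i
  have he : (v ≫ g) ≫ e = v ≫ g := by
    conv_rhs => rw [hS]
    rw [Preadditive.comp_sum]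
    simp
  let SC : ShortComplex G := ShortComplex.mk (kernel.ι p) p (kernel.condition p)
  have hSC : SC.ShortExact :=
    { exact := ShortComplex.exact_of_f_is_kernel _ (kernelIsKernel p)
      mono_f := by dsimp [SC]; infer_instance
      epi_g := hu }
  have hT := DerivedCategory.triangleOfSES_distinguished
    (hSC.map_of_exact (HomologicalComplex.single G (ComplexShape.up ℤ) n))
  obtain ⟨f₁, hf₁⟩ := Triangle.yoneda_exact₃ _ hT
    (show DerivedCategory.Q.obj ((HomologicalComplex.single G (ComplexShape.up ℤ) n).obj X) ⟶ _
      from f - f ≫ DerivedCategory.Q.map e) (by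
      change DerivedCategory.Q.map
        ((HomologicalComplex.single G (ComplexShape.up ℤ) n).map p) ≫
          (f - f ≫ DerivedCategory.Q.map e) = 0
      rw [Preadditive.comp_sub, ← Category.assoc, hpf, ← Functor.map_comp, he, sub_self])
  let δ : DerivedCategory.Q.obj ((HomologicalComplex.single G (ComplexShape.up ℤ) n).obj X) ⟶
      (DerivedCategory.Q.obj ((HomologicalComplex.single G (ComplexShape.up ℤ) n).obj (kernel p)))⟦(1 : ℤ)⟧ :=
    DerivedCategory.triangleOfSESδ
      (hSC.map_of_exact (HomologicalComplex.single G (ComplexShape.up ℤ) n))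
  let f₂ : (DerivedCategory.Q.obj ((HomologicalComplex.single G (ComplexShape.up ℤ) n).obj (kernel p)))⟦(1 : ℤ)⟧ ⟶
      DerivedCategory.Q.obj (∐ K) := f₁
  have hf₁' : f - f ≫ DerivedCategory.Q.map e = δ ≫ f₂ := hf₁
  refine ⟨kernel p, hker p hP₀ inferInstance, δ, f₂, ?_⟩
  have : f - δ ≫ f₂ = ∑ i ∈ S,
      (f ≫ DerivedCategory.Q.map (auxπ K i)) ≫ DerivedCategory.Q.map (Sigma.ι K i) := by
    rw [← hf₁', sub_sub_cancel]
    dsimp only [e]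
    rw [Functor.map_sum, Preadditive.comp_sum]
    refine Finset.sum_congr rfl fun i _ => ?_
    rw [Functor.map_comp]
    exact (Category.assoc _ _ _).symm
  rw [this]
  exact sum_mem fun i _ => cmap_mem _ (fun i => DerivedCategory.Q.obj (K i))
    (fun i => DerivedCategory.Q.map (Sigma.ι K i)) i _

theorem aux_step {ι : Type v} (rep : ι → G) [∀ i, IsFinitelyPresentable.{v} (rep i)]
    (hrep : ∀ ⦃X Y : G⦄ (f : X ⟶ Y), f ≠ 0 → ∃ i, ∃ g : rep i ⟶ X, g ≫ f ≠ 0)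
    (hker : ∀ ⦃X Y : G⦄ (f : X ⟶ Y), IsFinitelyPresentable.{v} X → IsFinitelyPresentable.{v} Y →
      IsFinitelyPresentable.{v} (kernel f))
    {I : Type v} [DecidableEq I] (K : I → CochainComplex G ℤ) (n n' : ℤ) (hn : n' + 1 = n)
    (X : G) [IsFinitelyPresentable.{v} X]
    (f : (DerivedCategory.singleFunctor G n).obj X ⟶ DerivedCategory.Q.obj (∐ K)) :
    ∃ (X' : G) (_ : IsFinitelyPresentable.{v} X')
      (δ : (DerivedCategory.singleFunctor G n).obj X ⟶
        (DerivedCategory.singleFunctor G n').obj X')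
      (f' : (DerivedCategory.singleFunctor G n').obj X' ⟶ DerivedCategory.Q.obj (∐ K)),
      f - δ ≫ f' ∈ (cmap ((DerivedCategory.singleFunctor G n).obj X)
        (fun i => DerivedCategory.Q.obj (K i))
        (fun i => DerivedCategory.Q.map (Sigma.ι K i))).range := by
  obtain ⟨X', hX', (δ : (DerivedCategory.singleFunctor G n).obj X ⟶
      ((DerivedCategory.singleFunctor G n).obj X')⟦(1 : ℤ)⟧),
      (f₁ : ((DerivedCategory.singleFunctor G n).obj X')⟦(1 : ℤ)⟧ ⟶ _), h⟩ :=
    aux_step0 rep hrep hker K n X f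
  let iso : ((DerivedCategory.singleFunctor G n).obj X')⟦(1 : ℤ)⟧ ≅
      (DerivedCategory.singleFunctor G n').obj X' :=
    ((DerivedCategory.singleFunctors G).shiftIso 1 n' n (by omega)).app X'
  refine ⟨X', hX', δ ≫ iso.hom, iso.inv ≫ f₁, ?_⟩
  have h3 : (δ ≫ iso.hom) ≫ iso.inv ≫ f₁ = δ ≫ f₁ := by simp
  rw [h3]
  exact h

theorem aux_iter {ι : Type v} (rep : ι → G) [∀ i, IsFinitelyPresentable.{v} (rep i)]
    (hrep : ∀ ⦃X Y : G⦄ (f : X ⟶ Y), f ≠ 0 → ∃ i, ∃ g : rep i ⟶ X, g ≫ f ≠ 0)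
    (hker : ∀ ⦃X Y : G⦄ (f : X ⟶ Y), IsFinitelyPresentable.{v} X → IsFinitelyPresentable.{v} Y →
      IsFinitelyPresentable.{v} (kernel f))
    {I : Type v} [DecidableEq I] (K : I → CochainComplex G ℤ)
    (X : G) [IsFinitelyPresentable.{v} X]
    (f : (DerivedCategory.singleFunctor G 0).obj X ⟶ DerivedCategory.Q.obj (∐ K)) (m : ℕ) :
    ∃ (X' : G) (_ : IsFinitelyPresentable.{v} X')
      (δ : (DerivedCategory.singleFunctor G 0).obj X ⟶
        (DerivedCategory.singleFunctor G (-(m : ℤ))).obj X')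
      (f' : (DerivedCategory.singleFunctor G (-(m : ℤ))).obj X' ⟶ DerivedCategory.Q.obj (∐ K)),
      f - δ ≫ f' ∈ (cmap ((DerivedCategory.singleFunctor G 0).obj X)
        (fun i => DerivedCategory.Q.obj (K i))
        (fun i => DerivedCategory.Q.map (Sigma.ι K i))).range := by
  induction m with
  | zero =>
    obtain ⟨k, hk⟩ : ∃ k : ℤ, k = -((0 : ℕ) : ℤ) := ⟨_, rfl⟩
    rw [← hk]
    obtain rfl : k = 0 := by simpa using hk
    exact ⟨X, inferInstance, 𝟙 _, f, by rw [Category.id_comp, sub_self]; exact zero_mem _⟩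
  | succ m ih =>
    obtain ⟨X₁, hX₁, δ, f₁, h₁⟩ := ih
    obtain ⟨X₂, hX₂, δ', f₂, h₂⟩ := aux_step rep hrep hker K (-(m : ℤ)) (-((m + 1 : ℕ) : ℤ))
      (by push_cast; ring) X₁ f₁
    refine ⟨X₂, hX₂, δ ≫ δ', f₂, ?_⟩
    have h₃ := cmap_comp δ (𝟙 _) (fun i => 𝟙 _) (fun i => by rw [Category.comp_id, Category.id_comp]) _ h₂
    have h₄ := add_mem h₁ h₃
    convert h₄ using 1
    simp

end Helpers

/-- Let `G` be a locally coherent Grothendieck category (the finitely presented objects form a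
skeletally small generating class closed under kernels) of finite global dimension `d`, and
let `X` be a finitely presented object of `G`.  Then the stalk complex `X[0]` is a compact
object of `D(G)`: for every family `(Mᵢ)` of objects of `D(G)` the canonical map
`⊕ᵢ Hom(X[0], Mᵢ) ⟶ Hom(X[0], ∐ᵢ Mᵢ)` is bijective. -/
theorem stmt19 [AB5 G] (G₀ : G) (hsep : IsSeparator G₀)
    [HasCoproducts.{v} (DerivedCategory G)]
    (hfp_gen : ∀ ⦃X Y : G⦄ (f : X ⟶ Y), f ≠ 0 → ∃ Z ∈ fpSet (G := G), ∃ g : Z ⟶ X, g ≫ f ≠ 0)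
    (hfp_ker : ∀ ⦃X Y : G⦄ (f : X ⟶ Y), X ∈ fpSet (G := G) → Y ∈ fpSet (G := G) →
      kernel f ∈ fpSet (G := G))
    (hfp_small : ∃ (ι : Type v) (rep : ι → G), (∀ i, rep i ∈ fpSet (G := G)) ∧
      ∀ X ∈ fpSet (G := G), ∃ i, Nonempty (X ≅ rep i))
    (d : ℕ)
    (hgldim : ∀ (k : ℤ), (d : ℤ) < k → ∀ M N : G,
      ∀ f : (DerivedCategory.singleFunctor G 0).obj M ⟶
        ((DerivedCategory.singleFunctor G 0).obj N)⟦k⟧, f = 0)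
    (X : G) (hX : X ∈ fpSet (G := G)) :
    ∀ (I : Type v) [DecidableEq I] (M : I → DerivedCategory G),
      Function.Bijective (cmap ((DerivedCategory.singleFunctor G 0).obj X) M
        (fun i => Sigma.ι M i)) := by
  intro I _ M
  refine ⟨aux_inj M _, fun f => ?_⟩
  obtain ⟨ι, rep, hrep1, hrep2⟩ := hfp_small
  have hrepfp : ∀ i, IsFinitelyPresentable.{v} (rep i) := fun i => (aux_fp_iff _).1 (hrep1 i)
  have hrep : ∀ ⦃X Y : G⦄ (f : X ⟶ Y), f ≠ 0 → ∃ i, ∃ g : rep i ⟶ X, g ≫ f ≠ 0 := by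
    intro X Y f hf
    obtain ⟨Z, hZ, g, hg⟩ := hfp_gen f hf
    obtain ⟨i, ⟨e⟩⟩ := hrep2 Z hZ
    refine ⟨i, e.inv ≫ g, fun h => hg ?_⟩
    rw [← cancel_epi e.inv, ← Category.assoc, h, comp_zero]
  have hker : ∀ ⦃X Y : G⦄ (f : X ⟶ Y), IsFinitelyPresentable.{v} X →
      IsFinitelyPresentable.{v} Y → IsFinitelyPresentable.{v} (kernel f) := fun X Y f h1 h2 =>
    (aux_fp_iff _).1 (hfp_ker f ((aux_fp_iff _).2 h1) ((aux_fp_iff _).2 h2))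
  have hXfp : IsFinitelyPresentable.{v} X := (aux_fp_iff _).1 hX
  -- representatives
  let L := DerivedCategory.Q.objPreimage (∐ M)
  let eL : DerivedCategory.Q.obj L ≅ ∐ M := DerivedCategory.Q.objObjPreimageIso (∐ M)
  have hex : ∀ i, ∃ (K : CochainComplex G ℤ) (e : M i ≅ DerivedCategory.Q.obj K) (g : K ⟶ L),
      Sigma.ι M i = e.hom ≫ DerivedCategory.Q.map g ≫ eL.hom := by
    intro i
    let e₀ := DerivedCategory.Q.objObjPreimageIso (M i)
    obtain ⟨K, s, hs, g, hg⟩ := DerivedCategory.right_fac (e₀.hom ≫ Sigma.ι M i ≫ eL.inv)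
    refine ⟨K, e₀.symm ≪≫ (asIso (DerivedCategory.Q.map s)).symm, g, ?_⟩
    have : Sigma.ι M i = e₀.inv ≫ (e₀.hom ≫ Sigma.ι M i ≫ eL.inv) ≫ eL.hom := by simp
    rw [this, hg]
    simp
  choose K e g hg using hex
  let r : DerivedCategory.Q.obj (∐ K) ⟶ ∐ M := DerivedCategory.Q.map (Sigma.desc g) ≫ eL.hom
  let c : ∐ M ⟶ DerivedCategory.Q.obj (∐ K) :=
    Sigma.desc (fun i => (e i).hom ≫ DerivedCategory.Q.map (Sigma.ι K i))
  have hr : ∀ i, DerivedCategory.Q.map (Sigma.ι K i) ≫ r = (e i).inv ≫ Sigma.ι M i := by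
    intro i
    rw [hg i, ← Category.assoc, ← Functor.map_comp, Sigma.ι_desc]
    simp
  have hcr : c ≫ r = 𝟙 _ := by
    refine Sigma.hom_ext _ _ (fun i => ?_)
    rw [Sigma.ι_desc_assoc, Category.assoc, hr]
    simp
  obtain ⟨X', _, δ, f', h⟩ := aux_iter rep hrep hker K X (f ≫ c) (d + 1)
  have hδ : δ = 0 := by
    let iso : ((DerivedCategory.singleFunctor G 0).obj X')⟦((d : ℤ) + 1)⟧ ≅
      (DerivedCategory.singleFunctor G (-((d + 1 : ℕ) : ℤ))).obj X' :=
      ((DerivedCategory.singleFunctors G).shiftIso ((d : ℤ) + 1) (-((d + 1 : ℕ) : ℤ)) 0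
        (by push_cast; ring)).app X'
    have h0 := hgldim ((d : ℤ) + 1) (by omega) X X' (δ ≫ iso.inv)
    rw [← cancel_mono iso.inv, h0, zero_comp]
  rw [hδ, zero_comp, sub_zero] at h
  have h2 := cmap_comp (𝟙 _) r (fun i => (e i).inv) hr _ h
  rw [Category.id_comp, Category.assoc, hcr, Category.comp_id] at h2
  exact h2
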